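/- Let 0 < K̲ < K̄. For κ > 0 let A(κ) be the n×n real matrix, rows and columns indexed by Ω^Q, with entries A(κ)(q,q) = −φ κ q², A(κ)(q, q−1) = λ⁺ e^{−1} for q > q̲, A(κ)(q, q+1) = λ⁻ e^{−1} for q < q̄, and 0 otherwise. For every κ > 0 all roots of the characteristic polynomial of A(κ) are real; let λ_max(κ) denote the largest eigenvalue of A(κ). Then the ergodic constant γ : κ ↦ λ_max(κ)/κ is twice continuously differentiable on [K̲, K̄]. -/

import Mathlib

/-- The matrix `A(κ)` from Theorem 2.2, rows and columns indexed by `Ω^Q = {q̲, …, q̄}`. -/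
noncomputable def Amat (qlow qhigh : ℤ) (lp lm phi : ℝ) (kappa : ℝ) :
    Matrix {q : ℤ // q ∈ Finset.Icc qlow qhigh} {q : ℤ // q ∈ Finset.Icc qlow qhigh} ℝ :=
  fun q q' =>
    if (q' : ℤ) = (q : ℤ) then -phi * kappa * ((q : ℤ) : ℝ) ^ 2
    else if (q' : ℤ) = (q : ℤ) - 1 then lp * Real.exp (-1)
    else if (q' : ℤ) = (q : ℤ) + 1 then lm * Real.exp (-1)
    else 0

/-!
The matrix `A(κ)` is tridiagonal with constant neighbouring diagonals `b`, `c` satisfying `b c > 0`,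
so conjugation by the diagonal matrix with entries `r ^ q`, `r = √(b c) / b`, makes it symmetric
without changing the characteristic polynomial. Hence all eigenvalues are real. They are also
simple: row `q` of the eigenvalue equation expresses `v (q + 1)` through the preceding entries, so
an eigenvector is determined by its first entry and the eigenspaces are lines.

The largest eigenvalue of a symmetric matrix is Lipschitz in the matrix (Weyl), hence continuous in
`κ`. Since it is a simple root of the characteristic polynomial, it coincides near each `κ` with the
analytic branch given by the implicit function theorem.
-/

open Filter Module Polynomial Topology
open scoped ContDiff Matrix

section Hessenberg

variable {n : Type*} [LinearOrder n]

/-- An unreduced lower Hessenberg matrix: the entries above the first superdiagonal vanish and those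
on the first superdiagonal do not. The index type is any linear order, so that `i ⋖ j` says that
`(i, j)` is a position on the first superdiagonal. -/
structure IsUnreducedHessenberg {R : Type*} [Zero R] (M : Matrix n n R) : Prop where
  apply_eq_zero : ∀ ⦃i k j : n⦄, i < k → k < j → M i j = 0
  apply_ne_zero : ∀ ⦃i j : n⦄, i ⋖ j → M i j ≠ 0

namespace IsUnreducedHessenberg

variable [Fintype n]

theorem eq_zero_of_mulVec_eq_smul {R : Type*} [Semiring R] [NoZeroDivisors R] {M : Matrix n n R}
    (hM : IsUnreducedHessenberg M) {μ : R} {v : n → R} (hv : M *ᵥ v = μ • v)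
    (hmin : ∀ i, IsMin i → v i = 0) : v = 0 := by
  funext j
  induction j using WellFoundedLT.induction with
  | ind j ih =>
    by_cases hj : IsMin j
    · exact hmin j hj
    obtain ⟨i, hij⟩ := exists_covBy_of_wellFoundedGT hj
    have row_eq : (M *ᵥ v) i = M i j * v j := by
      refine Finset.sum_eq_single_of_mem j (Finset.mem_univ j) fun k _ hkj => ?_
      rcases hkj.lt_or_gt with hlt | hgt
      · exact mul_eq_zero_of_right (M i k) (ih k hlt)
      · exact mul_eq_zero_of_left (hM.apply_eq_zero hij.lt hgt) (v k)
    have row_zero : M i j * v j = 0 := by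
      rw [← row_eq, hv, Pi.smul_apply, ih i hij.lt, Pi.zero_apply, smul_zero]
    exact (mul_eq_zero.1 row_zero).resolve_left (hM.apply_ne_zero hij)

theorem finrank_eigenspace_le_one {K : Type*} [Field K] {M : Matrix n n K}
    (hM : IsUnreducedHessenberg M) (μ : K) :
    finrank K (End.eigenspace (Matrix.toLin' M) μ) ≤ 1 := by
  cases isEmpty_or_nonempty n
  · simp [finrank_zero_of_subsingleton]
  obtain ⟨i₀, hi₀⟩ := Finite.exists_min (id : n → n)
  let first : End.eigenspace (Matrix.toLin' M) μ →ₗ[K] K :=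
    LinearMap.proj i₀ ∘ₗ Submodule.subtype _
  have first_injective : Function.Injective first := by
    refine (injective_iff_map_eq_zero first).2 fun v hv => Subtype.ext ?_
    refine hM.eq_zero_of_mulVec_eq_smul (End.mem_eigenspace_iff.1 v.2) fun i hi => ?_
    exact hi.eq_of_le (hi₀ i) ▸ hv
  exact (LinearMap.finrank_le_finrank_of_injective first_injective).trans_eq (finrank_self K)

end IsUnreducedHessenberg

end Hessenberg

section HermitianMatrix

variable {n : Type*} [Fintype n] [DecidableEq n]

theorem card_eigenvalues_eq_le_finrank_eigenspace {𝕜 : Type*} [RCLike 𝕜] {M : Matrix n n 𝕜}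
    (hM : M.IsHermitian) (μ : ℝ) :
    Fintype.card {i // hM.eigenvalues i = μ} ≤
      finrank 𝕜 (End.eigenspace (Matrix.toLin' M) (μ : 𝕜)) := by
  let b := hM.eigenvectorBasis
  have mem_eigenspace (i : {i // hM.eigenvalues i = μ}) :
      ⇑(b i) ∈ End.eigenspace (Matrix.toLin' M) (μ : 𝕜) := by
    rw [End.mem_eigenspace_iff, Matrix.toLin'_apply, hM.mulVec_eigenvectorBasis, i.2]
    exact RCLike.real_smul_eq_coe_smul μ _
  have independent : LinearIndependent 𝕜 fun i : {i // hM.eigenvalues i = μ} =>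
      (⟨b i, mem_eigenspace i⟩ : End.eigenspace (Matrix.toLin' M) (μ : 𝕜)) :=
    .of_comp ((WithLp.linearEquiv 2 𝕜 (n → 𝕜)).symm.toLinearMap ∘ₗ Submodule.subtype _)
      (b.orthonormal.linearIndependent.comp _ Subtype.val_injective)
  exact independent.fintype_card_le_finrank

theorem separable_charpoly_of_finrank_eigenspace_le_one {𝕜 : Type*} [RCLike 𝕜] {M : Matrix n n 𝕜}
    (hM : M.IsHermitian)
    (hfinrank : ∀ μ : ℝ, finrank 𝕜 (End.eigenspace (Matrix.toLin' M) (μ : 𝕜)) ≤ 1) :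
    M.charpoly.Separable := by
  rw [hM.charpoly_eq]
  refine separable_prod_X_sub_C_iff.2 (RCLike.ofReal_injective.comp fun i j hij => ?_)
  have := Fintype.card_le_one_iff_subsingleton.1
    ((card_eigenvalues_eq_le_finrank_eigenspace hM (hM.eigenvalues j)).trans (hfinrank _))
  exact congrArg Subtype.val (Subsingleton.elim
    (⟨i, hij⟩ : {k // hM.eigenvalues k = hM.eigenvalues j}) ⟨j, rfl⟩)

theorem dotProduct_mulVec_le_of_spectrum_le {M : Matrix n n ℝ} (hM : M.IsHermitian) {l : ℝ}
    (hl : l ∈ upperBounds (spectrum ℝ M)) (v : n → ℝ) : v ⬝ᵥ M *ᵥ v ≤ l * (v ⬝ᵥ v) := by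
  have hpos : (algebraMap ℝ (Matrix n n ℝ) l - M).PosSemidef := by
    refine Matrix.posSemidef_iff_isHermitian_and_spectrum_nonneg.2 ⟨?_, ?_⟩
    · exact (Matrix.isHermitian_diagonal _).sub hM
    · rw [← spectrum.singleton_sub_eq, Set.singleton_sub]
      rintro _ ⟨μ, hμ, rfl⟩
      exact sub_nonneg.2 (hl hμ)
  simpa [Matrix.sub_mulVec, Algebra.algebraMap_eq_smul_one, Matrix.smul_mulVec] using
    hpos.dotProduct_mulVec_nonneg v

section L2Operator

open scoped Matrix.Norms.L2Operator

theorem dotProduct_mulVec_le_l2_opNorm (M : Matrix n n ℝ) (v : n → ℝ) :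
    v ⬝ᵥ M *ᵥ v ≤ ‖M‖ * (v ⬝ᵥ v) := by
  let x : EuclideanSpace ℝ n := WithLp.toLp 2 v
  calc v ⬝ᵥ M *ᵥ v = inner ℝ x (Matrix.toEuclideanCLM (𝕜 := ℝ) M x) := by
        rw [Matrix.inner_toEuclideanCLM]
    _ ≤ ‖x‖ * ‖Matrix.toEuclideanCLM (𝕜 := ℝ) M x‖ := real_inner_le_norm _ _
    _ ≤ ‖x‖ * (‖M‖ * ‖x‖) := by gcongr; exact Matrix.l2_opNorm_mulVec M x
    _ = ‖M‖ * ‖x‖ ^ 2 := by ring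
    _ = ‖M‖ * (v ⬝ᵥ v) := by rw [EuclideanSpace.real_norm_sq_eq, dotProduct]; simp [x, sq]

theorem le_add_l2_opNorm_of_mem_spectrum {M N : Matrix n n ℝ} (hN : N.IsHermitian) {μ l : ℝ}
    (hμ : μ ∈ spectrum ℝ M) (hl : l ∈ upperBounds (spectrum ℝ N)) : μ ≤ l + ‖M - N‖ := by
  rw [← Matrix.spectrum_toLin', ← End.hasEigenvalue_iff_mem_spectrum] at hμ
  obtain ⟨v, hv⟩ := hμ.exists_hasEigenvector
  have hMv : M *ᵥ v = μ • v := hv.apply_eq_smul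
  have hpos : 0 < v ⬝ᵥ v := by simpa using Matrix.dotProduct_star_self_pos_iff.2 hv.2
  refine le_of_mul_le_mul_right ?_ hpos
  calc μ * (v ⬝ᵥ v) = v ⬝ᵥ N *ᵥ v + v ⬝ᵥ (M - N) *ᵥ v := by
        rw [← dotProduct_add, ← Matrix.add_mulVec, add_sub_cancel, hMv, dotProduct_smul,
          smul_eq_mul]
    _ ≤ l * (v ⬝ᵥ v) + ‖M - N‖ * (v ⬝ᵥ v) :=
        add_le_add (dotProduct_mulVec_le_of_spectrum_le hN hl v)
          (dotProduct_mulVec_le_l2_opNorm (M - N) v)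
    _ = (l + ‖M - N‖) * (v ⬝ᵥ v) := by ring

theorem continuousAt_of_isGreatest_spectrum {X : Type*} [TopologicalSpace X]
    {S : X → Matrix n n ℝ} {l : X → ℝ} {x : X} (hS : ContinuousAt S x)
    (hherm : ∀ᶠ t in 𝓝 x, (S t).IsHermitian)
    (hl : ∀ᶠ t in 𝓝 x, IsGreatest (spectrum ℝ (S t)) (l t)) : ContinuousAt l x := by
  refine tendsto_iff_norm_sub_tendsto_zero.2 <|
    squeeze_zero' (.of_forall fun _ => norm_nonneg _) ?_ (tendsto_iff_norm_sub_tendsto_zero.1 hS)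
  filter_upwards [hherm, hl] with t ht hlt
  refine abs_sub_le_iff.2 ⟨?_, ?_⟩
  · exact sub_le_iff_le_add'.2
      (le_add_l2_opNorm_of_mem_spectrum hherm.self_of_nhds hlt.1 hl.self_of_nhds.2)
  · rw [norm_sub_rev]
    exact sub_le_iff_le_add'.2 (le_add_l2_opNorm_of_mem_spectrum ht hl.self_of_nhds.1 hlt.2)

end L2Operator

end HermitianMatrix

section ImplicitFunction

variable {𝕜 : Type*} [RCLike 𝕜] {E : Type*} [NormedAddCommGroup E] [NormedSpace 𝕜 E]
  {k : ℕ∞ω} {x : E}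

theorem contDiffAt_of_eventually_apply_eq [CompleteSpace E] {F G : Type*}
    [NormedAddCommGroup F] [NormedSpace 𝕜 F] [CompleteSpace F]
    [NormedAddCommGroup G] [NormedSpace 𝕜 G] [CompleteSpace G] {f : E × F → G} {g : E → F}
    (hk : k ≠ 0) (hf : ContDiffAt 𝕜 k f (x, g x))
    (hinv : (fderiv 𝕜 f (x, g x) ∘L .inr 𝕜 E F).IsInvertible) (hg : ContinuousAt g x)
    (hfg : ∀ᶠ t in 𝓝 x, f (t, g t) = f (x, g x)) : ContDiffAt 𝕜 k g x := by
  refine (hf.contDiffAt_implicitFunction hk hinv).congr_of_eventuallyEq ?_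
  have hgraph : Tendsto (fun t => (t, g t)) (𝓝 x) (𝓝 (x, g x)) := continuousAt_id.prodMk hg
  filter_upwards [hgraph.eventually (hf.eventually_apply_eq_iff_implicitFunction hk hinv), hfg]
    with t hiff ht
  exact (hiff.1 ht).symm

theorem contDiffAt_of_isRoot_of_eval_derivative_ne_zero [CompleteSpace E] {P : E → 𝕜[X]}
    {g : E → 𝕜} (hk : k ≠ 0)
    (hP : ContDiffAt 𝕜 k (fun p : E × 𝕜 => (P p.1).eval p.2) (x, g x))
    (hsimple : (P x).derivative.eval (g x) ≠ 0) (hg : ContinuousAt g x)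
    (hroot : ∀ᶠ t in 𝓝 x, (P t).IsRoot (g t)) : ContDiffAt 𝕜 k g x := by
  set L := fderiv 𝕜 (fun p : E × 𝕜 => (P p.1).eval p.2) (x, g x) ∘L .inr 𝕜 E 𝕜
  have hL : L 1 = (P x).derivative.eval (g x) := by
    have hpartial : HasDerivAt (fun y => (P x).eval y) (L 1) (g x) :=
      (hP.differentiableAt hk).hasFDerivAt.comp_hasDerivAt (g x)
        ((hasDerivAt_const (g x) x).prodMk (hasDerivAt_id (g x)))
    exact hpartial.unique ((P x).hasDerivAt (g x))
  have hinv : L.IsInvertible := by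
    refine ⟨ContinuousLinearEquiv.unitsEquivAut 𝕜 (Units.mk0 _ hsimple), ?_⟩
    ext
    simp [← hL]
  refine contDiffAt_of_eventually_apply_eq hk hP hinv hg ?_
  filter_upwards [hroot] with t ht
  exact ht.trans hroot.self_of_nhds.symm

variable {n : Type*} [Fintype n] [DecidableEq n]

theorem contDiffAt_eval_charpoly {S : E → Matrix n n 𝕜}
    (hS : ∀ i j, ContDiffAt 𝕜 k (fun t => S t i j) x) (μ : 𝕜) :
    ContDiffAt 𝕜 k (fun p : E × 𝕜 => (S p.1).charpoly.eval p.2) (x, μ) := by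
  simp only [Matrix.eval_charpoly, Matrix.det_apply]
  refine .sum fun σ _ => .const_smul _ (contDiffAt_prod fun i _ => ?_)
  simp only [Matrix.sub_apply, Matrix.scalar_apply, Matrix.diagonal_apply]
  have hdiag : ContDiffAt 𝕜 k (fun p : E × 𝕜 => if σ i = i then p.2 else 0) (x, μ) := by
    split_ifs <;> fun_prop
  exact hdiag.sub ((hS (σ i) i).comp (x, μ) contDiffAt_fst)

end ImplicitFunction

theorem contDiffAt_of_isGreatest_spectrum {n : Type*} [Fintype n] [DecidableEq n] {E : Type*}
    [NormedAddCommGroup E] [NormedSpace ℝ E] [CompleteSpace E] {k : ℕ∞ω} (hk : k ≠ 0)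
    {S : E → Matrix n n ℝ} {l : E → ℝ} {x : E}
    (hS : ∀ i j, ContDiffAt ℝ k (fun t => S t i j) x)
    (hherm : ∀ᶠ t in 𝓝 x, (S t).IsHermitian)
    (hl : ∀ᶠ t in 𝓝 x, IsGreatest (spectrum ℝ (S t)) (l t))
    (hsimple : (S x).charpoly.derivative.eval (l x) ≠ 0) : ContDiffAt ℝ k l x := by
  have hroot : ∀ᶠ t in 𝓝 x, (S t).charpoly.IsRoot (l t) :=
    hl.mono fun t ht => Matrix.mem_spectrum_iff_isRoot_charpoly.1 ht.1
  have hcont : ContinuousAt S x :=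
    continuousAt_pi.2 fun i => continuousAt_pi.2 fun j => (hS i j).continuousAt
  exact contDiffAt_of_isRoot_of_eval_derivative_ne_zero (P := fun t => (S t).charpoly) hk
    (contDiffAt_eval_charpoly hS (l x)) hsimple
    (continuousAt_of_isGreatest_spectrum hcont hherm hl) hroot

theorem charpoly_eq_of_mul_eq_mul {n R : Type*} [Fintype n] [DecidableEq n] [CommRing R]
    {U A B : Matrix n n R} (hU : IsUnit U) (h : U * A = B * U) : A.charpoly = B.charpoly := by
  obtain ⟨D, rfl⟩ := hU
  rw [D.eq_mul_inv_iff_mul_eq.2 h.symm, Matrix.coe_units_inv, Matrix.charpoly_units_conj]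

section Tridiagonal

variable {lo hi : ℤ}

/-- The tridiagonal matrix indexed by `{lo, …, hi}` with diagonal `a`, constant subdiagonal `b` and
constant superdiagonal `c`. The diagonal is given on all of `ℤ`, of which only the part over
`{lo, …, hi}` matters. -/
def tridiagonal {R : Type*} [Zero R] (lo hi : ℤ) (a : ℤ → R) (b c : R) :
    Matrix {q : ℤ // q ∈ Finset.Icc lo hi} {q : ℤ // q ∈ Finset.Icc lo hi} R :=
  fun q q' =>
    if (q' : ℤ) = q then a q
    else if (q' : ℤ) = q - 1 then b
    else if (q' : ℤ) = q + 1 then c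
    else 0

theorem Amat_eq_tridiagonal (lp lm phi kappa : ℝ) :
    Amat lo hi lp lm phi kappa = tridiagonal lo hi (fun q => -phi * kappa * (q : ℝ) ^ 2)
      (lp * Real.exp (-1)) (lm * Real.exp (-1)) :=
  rfl

theorem isHermitian_tridiagonal {R : Type*} [Zero R] [Star R] [TrivialStar R] (a : ℤ → R) (c : R) :
    (tridiagonal lo hi a c c).IsHermitian := by
  ext q q'
  simp only [Matrix.conjTranspose_apply, star_trivial, tridiagonal]
  grind

theorem isUnreducedHessenberg_tridiagonal {R : Type*} [Zero R] (a : ℤ → R) (b : R) {c : R}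
    (hc : c ≠ 0) : IsUnreducedHessenberg (tridiagonal lo hi a b c) where
  apply_eq_zero i k j hik hkj := by
    have hik' : (i : ℤ) < k := hik
    have hkj' : (k : ℤ) < j := hkj
    simp only [tridiagonal]
    grind
  apply_ne_zero i j hij := by
    have hlt : (i : ℤ) < j := hij.lt
    have hsucc : (j : ℤ) = i + 1 := by
      by_contra hne
      have hmid : (i + 1 : ℤ) ∈ Finset.Icc lo hi := by grind
      refine hij.2 (c := ⟨i + 1, hmid⟩) ?_ ?_ <;> rw [← Subtype.coe_lt_coe] <;> grind
    simp only [tridiagonal]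
    grind

theorem charpoly_tridiagonal_mul_inv_mul {K : Type*} [Field K] (a : ℤ → K) (b c : K) {r : K}
    (hr : r ≠ 0) :
    (tridiagonal lo hi a b c).charpoly = (tridiagonal lo hi a (r * b) (r⁻¹ * c)).charpoly := by
  have hunit : IsUnit (Matrix.diagonal fun q : {q : ℤ // q ∈ Finset.Icc lo hi} => r ^ (q : ℤ)) :=
    Matrix.isUnit_diagonal.2 (Pi.isUnit_iff.2 fun q => (zpow_ne_zero (q : ℤ) hr).isUnit)
  refine charpoly_eq_of_mul_eq_mul hunit ?_
  ext q q'
  simp only [Matrix.diagonal_mul, Matrix.mul_diagonal, tridiagonal]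
  split_ifs with hdiag hsub hsuper
  · rw [hdiag, mul_comm]
  · rw [hsub, zpow_sub_one₀ hr]
    field_simp
  · rw [hsuper, zpow_add_one₀ hr]
    field_simp
  · simp

theorem charpoly_tridiagonal_eq_charpoly_sqrt (a : ℤ → ℝ) {b c : ℝ} (hbc : 0 < b * c) :
    (tridiagonal lo hi a b c).charpoly = (tridiagonal lo hi a √(b * c) √(b * c)).charpoly := by
  have hb : b ≠ 0 := left_ne_zero_of_mul hbc.ne'
  have hs : √(b * c) ≠ 0 := (Real.sqrt_pos.2 hbc).ne'
  rw [charpoly_tridiagonal_mul_inv_mul a b c (div_ne_zero hs hb), div_mul_cancel₀ _ hb, inv_div,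
    div_mul_eq_mul_div, Real.div_sqrt]

theorem splits_charpoly_tridiagonal (a : ℤ → ℝ) {b c : ℝ} (hbc : 0 < b * c) :
    (tridiagonal lo hi a b c).charpoly.Splits := by
  rw [charpoly_tridiagonal_eq_charpoly_sqrt a hbc]
  exact (isHermitian_tridiagonal a _).splits_charpoly

theorem separable_charpoly_tridiagonal_of_ne_zero (a : ℤ → ℝ) {c : ℝ} (hc : c ≠ 0) :
    (tridiagonal lo hi a c c).charpoly.Separable :=
  separable_charpoly_of_finrank_eigenspace_le_one (isHermitian_tridiagonal a c) fun μ =>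
    (isUnreducedHessenberg_tridiagonal a c hc).finrank_eigenspace_le_one μ

theorem contDiffAt_of_isGreatest_isRoot_charpoly_tridiagonal {E : Type*} [NormedAddCommGroup E]
    [NormedSpace ℝ E] [CompleteSpace E] {k : ℕ∞ω} (hk : k ≠ 0) {a : E → ℤ → ℝ} {b c : ℝ}
    (hbc : 0 < b * c) {l : E → ℝ} {x : E} (ha : ∀ q, ContDiffAt ℝ k (fun t => a t q) x)
    (hl : ∀ᶠ t in 𝓝 x, IsGreatest {μ | (tridiagonal lo hi (a t) b c).charpoly.IsRoot μ} (l t)) :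
    ContDiffAt ℝ k l x := by
  simp only [charpoly_tridiagonal_eq_charpoly_sqrt _ hbc] at hl
  have hsep := separable_charpoly_tridiagonal_of_ne_zero (lo := lo) (hi := hi) (a x)
    (Real.sqrt_pos.2 hbc).ne'
  have hsimple := hsep.eval₂_derivative_ne_zero (RingHom.id ℝ) hl.self_of_nhds.1
  simp only [← Matrix.mem_spectrum_iff_isRoot_charpoly, Set.ofPred_mem_eq] at hl
  refine contDiffAt_of_isGreatest_spectrum hk (fun q q' => ?_)
    (.of_forall fun t => isHermitian_tridiagonal (a t) _) hl hsimple
  simp only [tridiagonal]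
  split_ifs <;> fun_prop

end Tridiagonal

theorem stmt10_general (qlow qhigh : ℤ) (lp lm phi : ℝ) (hl : 0 < lp * lm) (lmax : ℝ → ℝ)
    (hlmax : ∀ kappa : ℝ, 0 < kappa →
      IsGreatest {mu : ℝ | (Amat qlow qhigh lp lm phi kappa).charpoly.IsRoot mu} (lmax kappa)) :
    (∀ (kappa : ℝ) (mu : ℂ),
      ((Amat qlow qhigh lp lm phi kappa).charpoly.map (algebraMap ℝ ℂ)).IsRoot mu → mu.im = 0) ∧
    ContDiffOn ℝ ω (fun kappa : ℝ => lmax kappa / kappa) (Set.Ioi 0) := by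
  have hbc : 0 < lp * Real.exp (-1) * (lm * Real.exp (-1)) := by
    rw [mul_mul_mul_comm]
    positivity
  refine ⟨fun kappa mu hmu => ?_, fun kappa hkappa => ?_⟩
  · rw [Amat_eq_tridiagonal] at hmu
    obtain ⟨μ, rfl⟩ :=
      (splits_charpoly_tridiagonal _ hbc).mem_range_of_isRoot (Matrix.charpoly_monic _).ne_zero hmu
    exact Complex.ofReal_im μ
  · have hsmooth : ContDiffAt ℝ ω lmax kappa := by
      refine contDiffAt_of_isGreatest_isRoot_charpoly_tridiagonal (lo := qlow) (hi := qhigh)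
        (a := fun t q => -phi * t * (q : ℝ) ^ 2) (by simp) hbc (fun q => by fun_prop) ?_
      filter_upwards [Ioi_mem_nhds hkappa] with t ht
      exact hlmax t ht
    exact (hsmooth.div contDiffAt_id (ne_of_gt hkappa)).contDiffWithinAt

theorem stmt10 (qlow qhigh : ℤ) (hlow : qlow < 0) (hhigh : 0 < qhigh)
    (lp lm phi : ℝ) (hlp : 0 < lp) (hlm : 0 < lm) (hphi : 0 ≤ phi)
    (Klow Khigh : ℝ) (hK : 0 < Klow) (hKK : Klow < Khigh)
    -- λ_max(κ) is the largest eigenvalue of A(κ)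
    (lmax : ℝ → ℝ)
    (hlmax : ∀ kappa : ℝ, 0 < kappa →
      IsGreatest {mu : ℝ | (Amat qlow qhigh lp lm phi kappa).charpoly.IsRoot mu}
        (lmax kappa)) :
    -- all roots of the characteristic polynomial of A(κ) are real
    (∀ kappa : ℝ, 0 < kappa → ∀ mu : ℂ,
      ((Amat qlow qhigh lp lm phi kappa).charpoly.map (algebraMap ℝ ℂ)).IsRoot mu →
      mu.im = 0) ∧
    -- κ ↦ λ_max(κ)/κ is twice continuously differentiable on [K̲, K̄]
    ContDiffOn ℝ 2 (fun kappa : ℝ => lmax kappa / kappa) (Set.Icc Klow Khigh) := by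
  obtain ⟨hreal, hsmooth⟩ := stmt10_general qlow qhigh lp lm phi (mul_pos hlp hlm) lmax hlmax
  exact ⟨fun kappa _ => hreal kappa,
    (hsmooth.of_le le_top).mono fun _ hkappa => hK.trans_le hkappa.1⟩
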